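/- Let p ≥ 2 be real and let h : ℝ^d → ℝ be defined by h(z) = ‖z‖_p^p. Then for all z_1, z_2 ∈ ℝ^d, ‖∇h(z_1) − ∇h(z_2)‖_{p*} ≥ (p/2^{p+1})·‖z_1 − z_2‖_p^{p−1}. -/

import Mathlib

open RealInnerProductSpace

/-- The ℓ_p norm on ℝ^d : `‖z‖_p = (Σ_i |z_i|^p)^(1/p)`. -/
noncomputable def lpnorm {d : ℕ} (p : ℝ) (z : EuclideanSpace ℝ (Fin d)) : ℝ :=
  (∑ i, |z i| ^ p) ^ (1 / p)

/-!
The function `z ↦ Σ |z_i|^p` is separable, so its gradient acts coordinatewise, as `p` times the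
signed power `x ↦ |x|^(p-2) x`. Signed powers of exponent `r ≥ 1` expand every distance `t` to at
least `2^(1-r) t^r`: by superadditivity of `t ↦ t^r` for points on the same side of the origin, and
by its convexity for points on opposite sides, where the pairs `±a` show that the constant is sharp.
Since `(p - 1) p* = p`, summing the `p*`-th powers of the coordinatewise bounds gives the claim.
-/

/-- The signed power, the odd extension of `x ↦ x ^ r` to the real line; the partial derivatives of
`Σ |z_i|^p` are `p` times signed powers of exponent `p - 1`. It is written without the sign function
to match the shape of the derivative of `|x| ^ p`; at `x = 0` the value is `0` for every `r`. -/
noncomputable def signedRpow (x r : ℝ) : ℝ := |x| ^ (r - 1) * x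

lemma signedRpow_neg (x r : ℝ) : signedRpow (-x) r = -signedRpow x r := by
  simp only [signedRpow, abs_neg, mul_neg]

lemma signedRpow_of_nonneg {x r : ℝ} (hx : 0 ≤ x) (hr : r ≠ 0) : signedRpow x r = x ^ r := by
  rw [signedRpow, abs_of_nonneg hx, ← Real.rpow_add_one' hx (by simpa using hr), sub_add_cancel]

lemma signedRpow_of_nonpos {x r : ℝ} (hx : x ≤ 0) (hr : r ≠ 0) :
    signedRpow x r = -(-x) ^ r := by
  rw [← signedRpow_of_nonneg (neg_nonneg.2 hx) hr, signedRpow_neg, neg_neg]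

lemma rpow_sub_le_rpow_sub_rpow {a b r : ℝ} (hb : 0 ≤ b) (hba : b ≤ a) (hr : 1 ≤ r) :
    (a - b) ^ r ≤ a ^ r - b ^ r := by
  have h := Real.add_rpow_le_rpow_add (sub_nonneg.2 hba) hb hr
  rw [sub_add_cancel] at h
  exact le_sub_right_of_add_le h

lemma two_rpow_mul_sub_rpow_le_rpow_sub_rpow {a b r : ℝ} (hb : 0 ≤ b) (hba : b ≤ a)
    (hr : 1 ≤ r) : 2 ^ (1 - r) * (a - b) ^ r ≤ a ^ r - b ^ r := by
  have two_rpow_le_one : (2 : ℝ) ^ (1 - r) ≤ 1 :=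
    Real.rpow_le_one_of_one_le_of_nonpos one_le_two (by linarith)
  calc 2 ^ (1 - r) * (a - b) ^ r
      ≤ (a - b) ^ r :=
        mul_le_of_le_one_left (Real.rpow_nonneg (sub_nonneg.2 hba) r) two_rpow_le_one
    _ ≤ a ^ r - b ^ r := rpow_sub_le_rpow_sub_rpow hb hba hr

lemma two_rpow_mul_add_rpow_le_rpow_add_rpow {a b r : ℝ} (ha : 0 ≤ a) (hb : 0 ≤ b)
    (hr : 1 ≤ r) : 2 ^ (1 - r) * (a + b) ^ r ≤ a ^ r + b ^ r := by
  rw [← neg_sub r 1, Real.rpow_neg zero_le_two, inv_mul_le_iff₀ (by positivity)]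
  lift a to NNReal using ha
  lift b to NNReal using hb
  exact_mod_cast NNReal.rpow_add_le_mul_rpow_add_rpow a b hr

lemma two_rpow_mul_sub_rpow_le_signedRpow_sub {a b r : ℝ} (hba : b ≤ a) (hr : 1 ≤ r) :
    2 ^ (1 - r) * (a - b) ^ r ≤ signedRpow a r - signedRpow b r := by
  have hr₀ : r ≠ 0 := by positivity
  rcases le_total 0 b with hb | hb
  · rw [signedRpow_of_nonneg (hb.trans hba) hr₀, signedRpow_of_nonneg hb hr₀]
    exact two_rpow_mul_sub_rpow_le_rpow_sub_rpow hb hba hr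
  rcases le_total 0 a with ha | ha
  · rw [signedRpow_of_nonneg ha hr₀, signedRpow_of_nonpos hb hr₀, sub_neg_eq_add,
      sub_eq_add_neg a b]
    exact two_rpow_mul_add_rpow_le_rpow_add_rpow ha (neg_nonneg.2 hb) hr
  · rw [signedRpow_of_nonpos ha hr₀, signedRpow_of_nonpos hb hr₀, neg_sub_neg, ← neg_sub_neg b a]
    exact two_rpow_mul_sub_rpow_le_rpow_sub_rpow (neg_nonneg.2 ha) (neg_le_neg hba) hr

lemma two_rpow_mul_abs_sub_rpow_le_abs_signedRpow_sub (a b : ℝ) {r : ℝ} (hr : 1 ≤ r) :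
    2 ^ (1 - r) * |a - b| ^ r ≤ |signedRpow a r - signedRpow b r| := by
  wlog hba : b ≤ a generalizing a b
  · rw [abs_sub_comm a, abs_sub_comm (signedRpow a r)]
    exact this b a (le_of_not_ge hba)
  rw [abs_of_nonneg (sub_nonneg.2 hba)]
  exact (two_rpow_mul_sub_rpow_le_signedRpow_sub hba hr).trans (le_abs_self _)

lemma mul_rpow_sum_rpow_le_rpow_sum_rpow {ι : Type*} {s : Finset ι} {x y : ι → ℝ} {c q r : ℝ}
    (hc : 0 ≤ c) (hq : 0 < q) (hr : r ≠ 0) (hx : ∀ i ∈ s, 0 ≤ x i)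
    (hxy : ∀ i ∈ s, c * x i ^ r ≤ y i) :
    c * ((∑ i ∈ s, x i ^ (r * q)) ^ (1 / (r * q))) ^ r ≤ (∑ i ∈ s, y i ^ q) ^ (1 / q) := by
  have sum_nonneg : 0 ≤ ∑ i ∈ s, x i ^ (r * q) :=
    Finset.sum_nonneg fun i hi => Real.rpow_nonneg (hx i hi) _
  have term_le (i : ι) (hi : i ∈ s) : c ^ q * x i ^ (r * q) ≤ y i ^ q := by
    have hxr : 0 ≤ x i ^ r := Real.rpow_nonneg (hx i hi) r
    rw [Real.rpow_mul (hx i hi), ← Real.mul_rpow hc hxr]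
    exact Real.rpow_le_rpow (mul_nonneg hc hxr) (hxy i hi) hq.le
  calc c * ((∑ i ∈ s, x i ^ (r * q)) ^ (1 / (r * q))) ^ r
      = c * (∑ i ∈ s, x i ^ (r * q)) ^ (1 / q) := by
        rw [← Real.rpow_mul sum_nonneg]
        congr 2
        field_simp
    _ = (c ^ q * ∑ i ∈ s, x i ^ (r * q)) ^ (1 / q) := by
        rw [Real.mul_rpow (Real.rpow_nonneg hc q) sum_nonneg, one_div,
          Real.rpow_rpow_inv hc hq.ne']
    _ ≤ (∑ i ∈ s, y i ^ q) ^ (1 / q) := by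
        refine Real.rpow_le_rpow (mul_nonneg (Real.rpow_nonneg hc q) sum_nonneg) ?_ (by positivity)
        rw [Finset.mul_sum]
        exact Finset.sum_le_sum term_le

section Gradient

variable {ι : Type*} [Fintype ι]

lemma hasGradientAt_sum_comp_apply {f : ι → ℝ → ℝ} {f' : ι → ℝ} {z : EuclideanSpace ℝ ι}
    (hf : ∀ i, HasDerivAt (f i) (f' i) (z i)) :
    HasGradientAt (fun w : EuclideanSpace ℝ ι => ∑ i, f i (w i)) (WithLp.toLp 2 f') z := by
  have hasFDerivAt_sum := HasFDerivAt.fun_sum (u := Finset.univ) fun i _ =>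
    (hf i).comp_hasFDerivAt z (EuclideanSpace.proj i : EuclideanSpace ℝ ι →L[ℝ] ℝ).hasFDerivAt
  rw [hasGradientAt_iff_hasFDerivAt]
  refine hasFDerivAt_sum.congr_fderiv (ContinuousLinearMap.ext fun v => ?_)
  simp [PiLp.inner_apply, mul_comm]

lemma gradient_sum_abs_rpow {p : ℝ} (hp : 1 < p) (z : EuclideanSpace ℝ ι) :
    gradient (fun w : EuclideanSpace ℝ ι => ∑ i, |w i| ^ p) z =
      WithLp.toLp 2 fun i => p * signedRpow (z i) (p - 1) := by
  have hasDerivAt_coord (i : ι) :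
      HasDerivAt (fun x : ℝ => |x| ^ p) (p * signedRpow (z i) (p - 1)) (z i) := by
    rw [signedRpow, sub_sub, one_add_one_eq_two, ← mul_assoc]
    exact hasDerivAt_abs_rpow (z i) hp
  exact (hasGradientAt_sum_comp_apply hasDerivAt_coord).gradient

theorem gradient_lp_pow_p_dual_norm_lower_bound_general {p q : ℝ} (hp : 2 ≤ p)
    (hpq : p.HolderConjugate q) (z₁ z₂ : EuclideanSpace ℝ ι) :
    p * 2 ^ (2 - p) * ((∑ i, |z₁ i - z₂ i| ^ p) ^ (1 / p)) ^ (p - 1) ≤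
      (∑ i, |gradient (fun w : EuclideanSpace ℝ ι => ∑ i, |w i| ^ p) z₁ i -
        gradient (fun w : EuclideanSpace ℝ ι => ∑ i, |w i| ^ p) z₂ i| ^ q) ^ (1 / q) := by
  have coord_le (i : ι) : p * 2 ^ (2 - p) * |z₁ i - z₂ i| ^ (p - 1) ≤
      |p * signedRpow (z₁ i) (p - 1) - p * signedRpow (z₂ i) (p - 1)| := by
    have h := two_rpow_mul_abs_sub_rpow_le_abs_signedRpow_sub (z₁ i) (z₂ i)
      (show 1 ≤ p - 1 by linarith)
    rw [show 1 - (p - 1) = 2 - p by ring] at h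
    rw [← mul_sub, abs_mul, abs_of_pos hpq.pos, mul_assoc]
    exact mul_le_mul_of_nonneg_left h hpq.nonneg
  have sum_le := mul_rpow_sum_rpow_le_rpow_sum_rpow (s := Finset.univ) (by positivity)
    hpq.symm.pos hpq.sub_one_ne_zero (fun i _ => abs_nonneg (z₁ i - z₂ i)) fun i _ => coord_le i
  rw [hpq.sub_one_mul_conj] at sum_le
  simpa only [gradient_sum_abs_rpow hpq.lt] using sum_le

end Gradient

lemma lpnorm_nonneg {d : ℕ} (p : ℝ) (z : EuclideanSpace ℝ (Fin d)) : 0 ≤ lpnorm p z :=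
  Real.rpow_nonneg (Finset.sum_nonneg fun i _ => Real.rpow_nonneg (abs_nonneg (z i)) p) _

lemma lpnorm_rpow_self {d : ℕ} {p : ℝ} (hp : p ≠ 0) (z : EuclideanSpace ℝ (Fin d)) :
    lpnorm p z ^ p = ∑ i, |z i| ^ p := by
  rw [lpnorm, one_div, Real.rpow_inv_rpow (Finset.sum_nonneg fun i _ => by positivity) hp]

lemma div_two_rpow_add_one_le {p : ℝ} (hp : 0 ≤ p) : p / 2 ^ (p + 1) ≤ p * 2 ^ (2 - p) := by
  rw [div_eq_mul_inv, ← Real.rpow_neg zero_le_two]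
  gcongr
  · exact one_le_two
  · linarith

/-- For `h(z) = ‖z‖_p^p` with `p ≥ 2`,
`‖∇h(z_1) − ∇h(z_2)‖_{p*} ≥ (p/2^{p+1})·‖z_1 − z_2‖_p^{p−1}`. -/
theorem gradient_lp_pow_p_dual_norm_lower_bound {d : ℕ} (p : ℝ) (hp : 2 ≤ p)
    (h : EuclideanSpace ℝ (Fin d) → ℝ)
    (hdef : ∀ z, h z = lpnorm p z ^ p)
    (z₁ z₂ : EuclideanSpace ℝ (Fin d)) :
    lpnorm (p / (p - 1)) (gradient h z₁ - gradient h z₂) ≥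
      (p / 2 ^ (p + 1)) * lpnorm p (z₁ - z₂) ^ (p - 1) := by
  have hp₁ : 1 < p := by linarith
  obtain rfl : h = fun z => ∑ i, |z i| ^ p :=
    funext fun z => (hdef z).trans (lpnorm_rpow_self (by positivity) z)
  exact (mul_le_mul_of_nonneg_right (div_two_rpow_add_one_le (by positivity))
    (Real.rpow_nonneg (lpnorm_nonneg p _) _)).trans
    (gradient_lp_pow_p_dual_norm_lower_bound_general hp (.conjExponent hp₁) z₁ z₂)
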